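/- arXiv:2009.03379 — 2 statements merged into one kernel-verified Lean document; each statement's English description precedes it below -/
import Mathlib

section
/- For a dataset D = {(x^t,p^t)}_{t=1}^T, ε ≥ ε*(D), and p̃ ∈ ℝ^K_{++}, the counterfactual quantity set X(p̃,D,ε) is a closed convex polyhedron; specifically, x̃ ∈ ℝ^K_+ belongs to X(p̃,D,ε) if and only if for every finite sequence {t_m}_{m=1}^M without repetitions, with t_m ∈ {1,…,T} and M ≥ 1, the inequality (p̃ − p^{t_M})·x̃ ≤ (M+1)ε + p̃·x^{t_1} − p^{t_M}·x^{t_M} − Σ_{m=1}^{M−1} p^{t_m}·(x^{t_m} − x^{t_{m+1}}) holds. -/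
/-!
Write `W t y = p^t·(y − x^t) + ε`. A utility `u` rationalizes the data exactly when
`u y − u (x^t) ≤ W t y` for all `t` and all `y ≥ 0`.

Necessity of the inequalities: summing these bounds along the cycle
`x̃ → x^{t_1} → ⋯ → x^{t_M} → x̃` telescopes to the stated inequality (`chain_lower`).

Sufficiency: let `u y` be the infimum of the costs of the simple chains
`x̃ → x^{t_1} → ⋯ → x^{t_M} → y` (`M ≥ 0`). A utility `u₀` rationalizing the original data
bounds these costs below. Extending a chain that ends at `x^t` by the step `t → y` gives the
inequality for observation `t`: if `t` already occurs in the chain, the chain is instead cut at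
that occurrence, which does not raise the cost because `u₀` makes every cycle in the data
nonnegative. The inequality for `x̃` amounts to `u x̃ ≥ 0`, which is the hypothesis.

Closedness and convexity follow because the set is then an intersection of half-spaces.
-/

open Finset

noncomputable section

/-- Dot product on `ℝ^K`. -/
def dot {K : ℕ} (a b : Fin K → ℝ) : ℝ := ∑ i, a i * b i

/-- `y ∈ ℝ^K_+`. -/
def Nonneg {K : ℕ} (y : Fin K → ℝ) : Prop := ∀ i, 0 ≤ y i

/-- The utility function `u` ε-rationalizes the dataset `{(x^t, p^t)}_{t=1}^T`. -/
def Rationalizes {K T : ℕ} (x p : Fin T → Fin K → ℝ) (ε : ℝ)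
    (u : (Fin K → ℝ) → ℝ) : Prop :=
  ∀ t : Fin T, ∀ y : Fin K → ℝ, Nonneg y →
    u y - dot (p t) y - ε ≤ u (x t) - dot (p t) (x t)

/-- The dataset `{(x^t, p^t)}_{t=1}^T` is ε-rationalized by quasilinear utility. -/
def EpsRationalized {K T : ℕ} (x p : Fin T → Fin K → ℝ) (ε : ℝ) : Prop :=
  ∃ u : (Fin K → ℝ) → ℝ, Rationalizes x p ε u

/-- `ε'` is the smallest `ε ≥ 0` such that the dataset is ε-rationalized. -/
def IsEpsStar {K T : ℕ} (x p : Fin T → Fin K → ℝ) (ε' : ℝ) : Prop :=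
  0 ≤ ε' ∧ EpsRationalized x p ε' ∧
    ∀ ε : ℝ, 0 ≤ ε → EpsRationalized x p ε → ε' ≤ ε

/-- The counterfactual quantity set `X(p̃,D,ε)`. -/
def Xset {K T : ℕ} (x p : Fin T → Fin K → ℝ) (pt : Fin K → ℝ) (ε : ℝ) :
    Set (Fin K → ℝ) :=
  {xt | Nonneg xt ∧ EpsRationalized (Fin.cons xt x) (Fin.cons pt p) ε}

lemma dot_sub_right {K : ℕ} (a b c : Fin K → ℝ) : dot a (b - c) = dot a b - dot a c := by
  simp [dot, mul_sub]

lemma dot_sub_left {K : ℕ} (a b c : Fin K → ℝ) : dot (a - b) c = dot a c - dot b c := by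
  simp [dot, sub_mul]

lemma dot_combo {K : ℕ} (c a b : Fin K → ℝ) (r s : ℝ) :
    dot c (r • a + s • b) = r * dot c a + s * dot c b := by
  simp only [dot, Pi.add_apply, Pi.smul_apply, smul_eq_mul, Finset.mul_sum]
  rw [← Finset.sum_add_distrib]
  exact Finset.sum_congr rfl fun i _ => by ring

/-- The cost of a step from observation `t` to the bundle `y`: the largest utility gain
`u y - u (x t)` compatible with ε-rationalization. -/
def stepCost {K T : ℕ} (x p : Fin T → Fin K → ℝ) (ε : ℝ) (t : Fin T) (y : Fin K → ℝ) : ℝ :=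
  dot (p t) (y - x t) + ε

/-- The cost of the chain of observations `σ 0 → σ 1 → ⋯ → σ n`. -/
def chainCost {K T : ℕ} (x p : Fin T → Fin K → ℝ) (ε : ℝ) (σ : ℕ → Fin T) (n : ℕ) : ℝ :=
  ∑ m ∈ Finset.range n, stepCost x p ε (σ m) (x (σ (m + 1)))

lemma step_lower {K T : ℕ} {x p : Fin T → Fin K → ℝ} {ε : ℝ} {u : (Fin K → ℝ) → ℝ}
    (hu : Rationalizes x p ε u) (t : Fin T) {y : Fin K → ℝ} (hy : Nonneg y) :
    u y - u (x t) ≤ stepCost x p ε t y := by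
  have := hu t y hy
  rw [stepCost, dot_sub_right]
  linarith

lemma chain_lower {K T : ℕ} {x p : Fin T → Fin K → ℝ} {ε : ℝ} {u : (Fin K → ℝ) → ℝ}
    (hx : ∀ t, Nonneg (x t)) (hu : Rationalizes x p ε u) (σ : ℕ → Fin T) {k n : ℕ}
    (hkn : k ≤ n) :
    u (x (σ n)) - u (x (σ k)) ≤ chainCost x p ε σ n - chainCost x p ε σ k := by
  induction n, hkn using Nat.le_induction with
  | base => simp
  | succ n _ ih =>
    have := step_lower hu (σ n) (hx (σ (n + 1)))
    rw [chainCost, Finset.sum_range_succ, ← chainCost]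
    linarith

/-- The costs of the simple chains from the counterfactual observation `(xt, pt)` to `y`. In the
second set the chain visits the `n + 1` distinct observations `σ 0, …, σ n`. -/
def pathCosts {K T : ℕ} (x p : Fin T → Fin K → ℝ) (pt xt : Fin K → ℝ) (ε : ℝ)
    (y : Fin K → ℝ) : Set ℝ :=
  {dot pt (y - xt) + ε} ∪
    {c | ∃ (n : ℕ) (σ : ℕ → Fin T), (∀ a b : ℕ, a < n + 1 → b < n + 1 → σ a = σ b → a = b) ∧
      c = dot pt (x (σ 0) - xt) + ε + chainCost x p ε σ n + stepCost x p ε (σ n) y}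

lemma pathCosts_bddBelow {K T : ℕ} {x p : Fin T → Fin K → ℝ} {ε : ℝ} {u : (Fin K → ℝ) → ℝ}
    (hx : ∀ t, Nonneg (x t)) (hu : Rationalizes x p ε u) (pt xt : Fin K → ℝ)
    {y : Fin K → ℝ} (hy : Nonneg y) : BddBelow (pathCosts x p pt xt ε y) := by
  refine (bddBelow_singleton).union ?_
  -- A chain with first observation `t` costs at least the value at `t` of the function below.
  obtain ⟨b, hb⟩ := (Set.finite_range
    (fun t : Fin T => dot pt (x t - xt) + ε + (u y - u (x t)))).bddBelow
  refine ⟨b, ?_⟩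
  rintro c ⟨n, σ, -, rfl⟩
  have h1 := hb ⟨σ 0, rfl⟩
  have h2 := chain_lower hx hu σ (Nat.zero_le n)
  have h3 := step_lower hu (σ n) hy
  have h0 : chainCost x p ε σ 0 = 0 := by simp [chainCost]
  simp only at h1
  linarith

/-- Every simple chain to `x t` yields one to `y` costing at most the step cost from `t` to `y` more:
append `t`, or cut the chain at `t` if it already passes through it. -/
lemma pathCosts_extend {K T : ℕ} {x p : Fin T → Fin K → ℝ} {ε : ℝ} {u : (Fin K → ℝ) → ℝ}
    (hx : ∀ t, Nonneg (x t)) (hu : Rationalizes x p ε u) (pt xt : Fin K → ℝ) (t : Fin T)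
    (y : Fin K → ℝ) {c : ℝ} (hc : c ∈ pathCosts x p pt xt ε (x t)) :
    ∃ c' ∈ pathCosts x p pt xt ε y, c' ≤ c + stepCost x p ε t y := by
  rcases hc with hc | ⟨n, σ, hσ, rfl⟩
  · rw [Set.mem_singleton_iff] at hc
    subst hc
    refine ⟨_, Or.inr ⟨0, fun _ => t, fun a b _ _ _ => by omega, rfl⟩, ?_⟩
    simp [chainCost]
  · by_cases h : ∃ k, k ≤ n ∧ σ k = t
    · obtain ⟨k, hk, rfl⟩ := h
      refine ⟨_, Or.inr ⟨k, σ, fun a b ha hb => hσ a b (by omega) (by omega), rfl⟩, ?_⟩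
      have h1 := chain_lower hx hu σ hk
      have h2 := step_lower hu (σ n) (hx (σ k))
      linarith
    · push Not at h
      set τ : ℕ → Fin T := fun m => if m ≤ n then σ m else t with hτ
      have hle : ∀ m, m ≤ n → τ m = σ m := fun m hm => by simp [hτ, hm]
      have hlast : τ (n + 1) = t := by simp [hτ]
      refine ⟨_, Or.inr ⟨n + 1, τ, ?_, rfl⟩, ?_⟩
      · intro a b ha hb hab
        rcases Nat.lt_succ_iff_lt_or_eq.1 ha with ha | rfl <;>
          rcases Nat.lt_succ_iff_lt_or_eq.1 hb with hb | rfl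
        · rw [hle a (by omega), hle b (by omega)] at hab
          exact hσ a b ha hb hab
        · rw [hle a (by omega), hlast] at hab
          exact absurd hab (h a (by omega))
        · rw [hle b (by omega), hlast] at hab
          exact absurd hab.symm (h b (by omega))
        · rfl
      · have hchain : chainCost x p ε τ n = chainCost x p ε σ n := by
          refine Finset.sum_congr rfl fun m hm => ?_
          rw [Finset.mem_range] at hm
          rw [hle m (by omega), hle (m + 1) (by omega)]
        rw [chainCost, Finset.sum_range_succ, ← chainCost, hchain, hlast, hle 0 (by omega),
          hle n le_rfl]
        linarith

/-- The stated inequality for the sequence `σ 0, …, σ n` says that the cycle through `(xt, pt)`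
and these observations has nonnegative cost. -/
lemma ineq_iff {K T : ℕ} (x p : Fin T → Fin K → ℝ) (pt xt : Fin K → ℝ) (ε : ℝ)
    (n : ℕ) (σ : ℕ → Fin T) :
    (dot (pt - p (σ n)) xt ≤
      (((n + 1 : ℕ) : ℝ) + 1) * ε + dot pt (x (σ 0)) - dot (p (σ n)) (x (σ n))
        - ∑ m ∈ Finset.range n, dot (p (σ m)) (x (σ m) - x (σ (m + 1)))) ↔
    0 ≤ dot pt (x (σ 0) - xt) + ε + chainCost x p ε σ n + stepCost x p ε (σ n) xt := by
  have h : chainCost x p ε σ n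
      = n * ε - ∑ m ∈ Finset.range n, dot (p (σ m)) (x (σ m) - x (σ (m + 1))) := by
    simp only [chainCost, stepCost, dot_sub_right, Finset.sum_add_distrib, Finset.sum_sub_distrib,
      Finset.sum_const, Finset.card_range, nsmul_eq_mul]
    ring
  rw [h, stepCost, dot_sub_left, dot_sub_right, dot_sub_right]
  push_cast
  constructor <;> intro h <;> linarith

lemma mem_Xset_iff {K T : ℕ} {x p : Fin T → Fin K → ℝ} {ε : ℝ}
    (hx : ∀ t, Nonneg (x t)) (hε : 0 ≤ ε) (hD : EpsRationalized x p ε)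
    (pt xt : Fin K → ℝ) (hxt : Nonneg xt) :
    xt ∈ Xset x p pt ε ↔
      ∀ (n : ℕ) (σ : ℕ → Fin T), (∀ a b : ℕ, a < n + 1 → b < n + 1 → σ a = σ b → a = b) →
        0 ≤ dot pt (x (σ 0) - xt) + ε + chainCost x p ε σ n + stepCost x p ε (σ n) xt := by
  constructor
  · rintro ⟨-, u, hu⟩ n σ -
    have hu' : Rationalizes x p ε u := fun t y hy => by simpa using hu t.succ y hy
    have h1 : u (x (σ 0)) - dot pt (x (σ 0)) - ε ≤ u xt - dot pt xt := by
      simpa using hu 0 (x (σ 0)) (hx _)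
    have h2 := chain_lower hx hu' σ (Nat.zero_le n)
    have h3 := step_lower hu' (σ n) hxt
    have h0 : chainCost x p ε σ 0 = 0 := by simp [chainCost]
    rw [dot_sub_right]
    linarith
  · intro h
    obtain ⟨u₀, hu₀⟩ := hD
    refine ⟨hxt, fun y => sInf (pathCosts x p pt xt ε y), ?_⟩
    have hne : ∀ y, (pathCosts x p pt xt ε y).Nonempty := fun y => ⟨_, Or.inl rfl⟩
    intro t
    refine Fin.cases ?_ (fun t => ?_) t
    · intro y hy
      simp only [Fin.cons_zero]
      have h1 : sInf (pathCosts x p pt xt ε y) ≤ dot pt (y - xt) + ε :=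
        csInf_le (pathCosts_bddBelow hx hu₀ pt xt hy) (Or.inl rfl)
      have h2 : 0 ≤ sInf (pathCosts x p pt xt ε xt) := by
        refine le_csInf (hne _) ?_
        rintro c (hc | ⟨n, σ, hσ, rfl⟩)
        · rw [Set.mem_singleton_iff.1 hc, dot_sub_right]
          linarith
        · exact h n σ hσ
      rw [dot_sub_right] at h1
      linarith
    · intro y hy
      simp only [Fin.cons_succ]
      have h1 : sInf (pathCosts x p pt xt ε y) - stepCost x p ε t y
          ≤ sInf (pathCosts x p pt xt ε (x t)) := by
        refine le_csInf (hne _) fun c hc => ?_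
        obtain ⟨c', hc', hle⟩ := pathCosts_extend hx hu₀ pt xt t y hc
        have := csInf_le (pathCosts_bddBelow hx hu₀ pt xt hy) hc'
        linarith
      rw [stepCost, dot_sub_right] at h1
      linarith

/-- For `ε ≥ ε*(D)`, `X(p̃,D,ε)` is a closed convex polyhedron; a nonnegative
`x̃` belongs to it iff, for every finite sequence `t_1,…,t_M` (`M ≥ 1`, no repetitions,
encoded as `σ : ℕ → Fin T` injective below `M`, with `t_1 = σ 0` and `t_M = σ (M-1)`),
`(p̃ − p^{t_M})·x̃ ≤ (M+1)ε + p̃·x^{t_1} − p^{t_M}·x^{t_M} − Σ_{m=1}^{M−1} p^{t_m}·(x^{t_m} − x^{t_{m+1}})`. -/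
theorem counterfactual_set_polyhedron {K T : ℕ} (x p : Fin T → Fin K → ℝ)
    (hx : ∀ t, Nonneg (x t)) (hp : ∀ t i, 0 < p t i)
    (εstar : ℝ) (hstar : IsEpsStar x p εstar) (ε : ℝ) (hε : εstar ≤ ε)
    (pt : Fin K → ℝ) (hpt : ∀ i, 0 < pt i) :
    IsClosed (Xset x p pt ε) ∧ Convex ℝ (Xset x p pt ε) ∧
    (∀ xt : Fin K → ℝ, Nonneg xt →
      (xt ∈ Xset x p pt ε ↔
        ∀ (M : ℕ) (σ : ℕ → Fin T), 1 ≤ M →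
          (∀ a b : ℕ, a < M → b < M → σ a = σ b → a = b) →
          dot (pt - p (σ (M - 1))) xt ≤
            ((M : ℝ) + 1) * ε + dot pt (x (σ 0)) - dot (p (σ (M - 1))) (x (σ (M - 1)))
              - ∑ m ∈ Finset.range (M - 1), dot (p (σ m)) (x (σ m) - x (σ (m + 1))))) := by
  have hε0 : 0 ≤ ε := hstar.1.trans hε
  have hD : EpsRationalized x p ε := by
    obtain ⟨u, hu⟩ := hstar.2.1
    exact ⟨u, fun t y hy => by linarith [hu t y hy]⟩
  have hmem : ∀ xt : Fin K → ℝ, Nonneg xt →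
      (xt ∈ Xset x p pt ε ↔
        ∀ (M : ℕ) (σ : ℕ → Fin T), 1 ≤ M →
          (∀ a b : ℕ, a < M → b < M → σ a = σ b → a = b) →
          dot (pt - p (σ (M - 1))) xt ≤
            ((M : ℝ) + 1) * ε + dot pt (x (σ 0)) - dot (p (σ (M - 1))) (x (σ (M - 1)))
              - ∑ m ∈ Finset.range (M - 1), dot (p (σ m)) (x (σ m) - x (σ (m + 1)))) := by
    intro xt hxt
    rw [mem_Xset_iff hx hε0 hD pt xt hxt]
    constructor
    · intro h M σ hM hσ
      obtain ⟨n, rfl⟩ : ∃ n, M = n + 1 := ⟨M - 1, by omega⟩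
      exact (ineq_iff x p pt xt ε n σ).2 (h n σ hσ)
    · intro h n σ hσ
      exact (ineq_iff x p pt xt ε n σ).1 (h (n + 1) σ (by omega) hσ)
  refine ⟨?_, ?_, hmem⟩
  · have heq : Xset x p pt ε = {xt | Nonneg xt ∧ _} :=
      Set.ext fun xt => ⟨fun h => ⟨h.1, (hmem xt h.1).1 h⟩, fun h => (hmem xt h.1).2 h.2⟩
    rw [heq]
    simp only [Nonneg, Set.ofPred_and, Set.ofPred_forall]
    refine IsClosed.inter (isClosed_iInter fun i => ?_) ?_
    · exact isClosed_le continuous_const (continuous_apply i)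
    · refine isClosed_iInter fun M => isClosed_iInter fun σ => isClosed_iInter fun _ =>
        isClosed_iInter fun _ => isClosed_le ?_ continuous_const
      unfold dot
      fun_prop
  · intro a ha b hb r s hr hs hrs
    have hnn : Nonneg (r • a + s • b) := fun i =>
      add_nonneg (mul_nonneg hr (ha.1 i)) (mul_nonneg hs (hb.1 i))
    rw [hmem _ hnn]
    intro M σ hM hσ
    have h1 := mul_le_mul_of_nonneg_left ((hmem a ha.1).1 ha M σ hM hσ) hr
    have h2 := mul_le_mul_of_nonneg_left ((hmem b hb.1).1 hb M σ hM hσ) hs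
    rw [dot_combo]
    refine (add_le_add h1 h2).trans_eq ?_
    rw [← add_mul, hrs, one_mul]
end
end

section
/- For a dataset {(x^t,p^t)}_{t=1}^T with x̃^0 = x^S in the dataset, the upper bound on utility differences ū(x̃^1, x^S, ε) = sup{u(x̃^1) − u(x^S) : u ε-rationalizes the dataset} is strictly increasing and continuous jointly in (x̃^1, ε) over the region where ε ≥ ε* and x̃^1 ≠ x^S. -/
/-!
Write `D ε t = ū(x^t, x^S, ε)` for the upper bound at the data points. Each `ε`-rationalizing `u`
satisfies `u y - u (x^S) ≤ (u (x^t) - u (x^S)) + p^t·(y - x^t) + ε`, so for every `y` the upper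
bound is at most `min_t (D ε t + p^t·(y - x^t)) + ε`. For `y ≠ x^S` this is an equality
(`ubar_eq`): the function `z ↦ min_t (D ε t + p^t·(z - x^t)) + ε`, reset to `0` at `x^S`, is itself
`ε`-rationalizing, because `D ε` satisfies the Afriat-type inequalities `Feas`
(`Feas.inf_le_ubar`, `feas_ubar`).

Strict monotonicity can be read off this formula: the prices are positive, `D ε t` is nondecreasing
in `ε`, and there is the extra summand `ε`. Continuity reduces to continuity of `ε ↦ D ε t` on
`[ε*, ∞)`. Since `D ε` is the largest solution of `Feas ε`, a linear system in `(v, ε)`, it is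
concave in `ε`, hence continuous on `(ε*, ∞)`. At `ε*`, where concavity is not enough, the right
limit of `D ε` is again a solution of the system (weak inequalities pass to the limit) and so is at
most `D ε*`, while monotonicity gives the opposite inequality.
-/

open Finset

noncomputable section

/-- The upper bound `ū(x̃^1, x^S, ε)` on utility differences, as a function of the pair
`(x̃^1, ε)`. -/
def ubar {K T : ℕ} (x p : Fin T → Fin K → ℝ) (S : Fin T)
    (q : (Fin K → ℝ) × ℝ) : ℝ :=
  sSup {d : ℝ | ∃ u : (Fin K → ℝ) → ℝ,
    Rationalizes x p q.2 u ∧ d = u q.1 - u (x S)}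

/-- The region `{(x̃^1, ε) : x̃^1 ∈ ℝ^K_+, ε ≥ ε*, x̃^1 ≠ x^S}`. -/
def ubarRegion {K T : ℕ} (x : Fin T → Fin K → ℝ) (S : Fin T) (εstar : ℝ) :
    Set ((Fin K → ℝ) × ℝ) :=
  {q | Nonneg q.1 ∧ εstar ≤ q.2 ∧ q.1 ≠ x S}

open Filter Topology

/-- The Afriat-type inequalities for candidate utility levels `v t` of the bundles `x t`, normalized
to `0` at `x S`. Equality of the levels at repeated bundles is required only for copies of `x S`;
the largest solution satisfies it for all bundles anyway. -/
def Feas {K T : ℕ} (x p : Fin T → Fin K → ℝ) (S : Fin T) (ε : ℝ) (v : Fin T → ℝ) : Prop :=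
  (∀ t, x t = x S → v t = 0) ∧
    ∀ s t, v s ≤ v t + dot (p t) (x s) - dot (p t) (x t) + ε

section Aux

variable {K T : ℕ} {x p : Fin T → Fin K → ℝ} {S : Fin T} {ε ε' : ℝ}

lemma Rationalizes.mono {u : (Fin K → ℝ) → ℝ} (h : Rationalizes x p ε u) (hε : ε ≤ ε') :
    Rationalizes x p ε' u := fun t y hy => by
  have := h t y hy
  linarith

lemma Feas.mono {v : Fin T → ℝ} (h : Feas x p S ε v) (hε : ε ≤ ε') : Feas x p S ε' v :=
  ⟨h.1, fun s t => by have := h.2 s t; linarith⟩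

lemma le_ubar {u : (Fin K → ℝ) → ℝ} (h : Rationalizes x p ε u) {y : Fin K → ℝ} (hy : Nonneg y) :
    u y - u (x S) ≤ ubar x p S (y, ε) := by
  refine le_csSup ⟨dot (p S) y - dot (p S) (x S) + ε, ?_⟩ ⟨u, h, rfl⟩
  rintro _ ⟨w, hw, rfl⟩
  have : w y - dot (p S) y - ε ≤ w (x S) - dot (p S) (x S) := hw S y hy
  change w y - w (x S) ≤ _
  linarith

lemma ubar_le (hne : EpsRationalized x p ε) {y : Fin K → ℝ} {c : ℝ}
    (h : ∀ u, Rationalizes x p ε u → u y - u (x S) ≤ c) : ubar x p S (y, ε) ≤ c := by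
  obtain ⟨u, hu⟩ := hne
  refine csSup_le ⟨_, u, hu, rfl⟩ ?_
  rintro _ ⟨w, hw, rfl⟩
  exact h w hw

/-- The lower envelope of the affine functions with levels `v t` and slopes `p t` at `x t`. -/
def envelope (x p : Fin T → Fin K → ℝ) (S : Fin T) (v : Fin T → ℝ) (y : Fin K → ℝ) : ℝ :=
  (univ : Finset (Fin T)).inf' ⟨S, mem_univ S⟩
    (fun t => v t + dot (p t) y - dot (p t) (x t))

lemma envelope_le (v : Fin T → ℝ) (y : Fin K → ℝ) (t : Fin T) :
    envelope x p S v y ≤ v t + dot (p t) y - dot (p t) (x t) :=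
  inf'_le (fun t => v t + dot (p t) y - dot (p t) (x t)) (mem_univ t)

lemma le_envelope {v : Fin T → ℝ} {y : Fin K → ℝ} {c : ℝ}
    (h : ∀ t, c ≤ v t + dot (p t) y - dot (p t) (x t)) : c ≤ envelope x p S v y :=
  le_inf' _ _ fun t _ => h t

/-- Feasible levels extend to a rationalizing utility: the envelope shifted up by `ε`, reset to `0`
at `x S`. Its levels at the data points may exceed `v`, which only relaxes the constraints. -/
lemma Feas.inf_le_ubar {v : Fin T → ℝ} (h : Feas x p S ε v) {y : Fin K → ℝ} (hy : Nonneg y)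
    (hyS : y ≠ x S) : envelope x p S v y + ε ≤ ubar x p S (y, ε) := by
  classical
  let u : (Fin K → ℝ) → ℝ := fun z => if z = x S then 0 else envelope x p S v z + ε
  have huS : u (x S) = 0 := if_pos rfl
  have hu : ∀ z, z ≠ x S → u z = envelope x p S v z + ε := fun z hz => if_neg hz
  have hv : ∀ t, v t ≤ u (x t) := by
    intro t
    by_cases ht : x t = x S
    · rw [ht, huS, h.1 t ht]
    · rw [hu _ ht]
      have : v t - ε ≤ envelope x p S v (x t) :=
        le_envelope fun s => by have := h.2 t s; linarith
      linarith
  have hrat : Rationalizes x p ε u := by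
    intro t z _
    have h1 := hv t
    by_cases hz : z = x S
    · have h2 := h.2 S t
      rw [h.1 S rfl] at h2
      rw [hz, huS]
      linarith
    · have h2 := envelope_le (x := x) (p := p) (S := S) v z t
      rw [hu z hz]
      linarith
  have := le_ubar (S := S) hrat hy
  rwa [huS, hu y hyS, sub_zero] at this

lemma ubar_self (hx : ∀ t, Nonneg (x t)) (hne : EpsRationalized x p ε) :
    ubar x p S (x S, ε) = 0 := by
  apply le_antisymm
  · exact ubar_le hne fun u _ => (sub_self _).le
  · obtain ⟨u, hu⟩ := hne
    have := le_ubar (S := S) hu (hx S)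
    rwa [sub_self] at this

lemma Feas.le_ubar (hx : ∀ t, Nonneg (x t)) (hne : EpsRationalized x p ε) {v : Fin T → ℝ}
    (h : Feas x p S ε v) (t : Fin T) : v t ≤ ubar x p S (x t, ε) := by
  by_cases ht : x t = x S
  · rw [h.1 t ht, ht, ubar_self hx hne]
  · refine le_trans ?_ (h.inf_le_ubar (hx t) ht)
    have : v t - ε ≤ envelope x p S v (x t) :=
      le_envelope fun s => by have := h.2 t s; linarith
    linarith

lemma ubar_le_affine (hx : ∀ t, Nonneg (x t)) (hne : EpsRationalized x p ε) {y : Fin K → ℝ}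
    (hy : Nonneg y) (t : Fin T) :
    ubar x p S (y, ε) ≤ ubar x p S (x t, ε) + dot (p t) y - dot (p t) (x t) + ε :=
  ubar_le hne fun u hu => by
    have h1 := _root_.le_ubar (S := S) hu (hx t)
    have h2 := hu t y hy
    linarith

lemma feas_ubar (hx : ∀ t, Nonneg (x t)) (hne : EpsRationalized x p ε) :
    Feas x p S ε (fun t => ubar x p S (x t, ε)) :=
  ⟨fun t ht => by simp only [ht, ubar_self hx hne], fun s t => ubar_le_affine hx hne (hx s) t⟩

/-- Away from `x S`, the upper bound is the shifted envelope of its own values at the data. -/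
lemma ubar_eq (hx : ∀ t, Nonneg (x t)) (hne : EpsRationalized x p ε) {y : Fin K → ℝ}
    (hy : Nonneg y) (hyS : y ≠ x S) :
    ubar x p S (y, ε) = envelope x p S (fun t => ubar x p S (x t, ε)) y + ε := by
  apply le_antisymm
  · have : ubar x p S (y, ε) - ε ≤ envelope x p S (fun t => ubar x p S (x t, ε)) y :=
      le_envelope fun t => by have := ubar_le_affine (S := S) hx hne hy t; linarith
    linarith
  · exact (feas_ubar hx hne).inf_le_ubar hy hyS

lemma ubar_mono (hx : ∀ t, Nonneg (x t)) (hne : EpsRationalized x p ε) (hε : ε ≤ ε')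
    (t : Fin T) : ubar x p S (x t, ε) ≤ ubar x p S (x t, ε') := by
  have hne' : EpsRationalized x p ε' := hne.imp fun u hu => hu.mono hε
  exact ((feas_ubar hx hne).mono hε).le_ubar hx hne' t

lemma concaveOn_ubar (hx : ∀ t, Nonneg (x t)) {e : ℝ} (hne : ∀ ε, e ≤ ε → EpsRationalized x p ε)
    (t : Fin T) : ConcaveOn ℝ (Set.Ici e) (fun ε => ubar x p S (x t, ε)) := by
  refine ⟨convex_Ici e, fun ε₁ h₁ ε₂ h₂ a b ha hb hab => ?_⟩
  have f₁ := feas_ubar (S := S) hx (hne ε₁ h₁)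
  have f₂ := feas_ubar (S := S) hx (hne ε₂ h₂)
  have f : Feas x p S (a • ε₁ + b • ε₂)
      (fun t => a • ubar x p S (x t, ε₁) + b • ubar x p S (x t, ε₂)) := by
    refine ⟨fun s hs => ?_, fun s r => ?_⟩
    · have g₁ := f₁.1 s hs
      have g₂ := f₂.1 s hs
      simp only at g₁ g₂
      simp [g₁, g₂]
    · have g₁ := mul_le_mul_of_nonneg_left (f₁.2 s r) ha
      have g₂ := mul_le_mul_of_nonneg_left (f₂.2 s r) hb
      simp only [smul_eq_mul]
      obtain rfl : b = 1 - a := by linarith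
      linarith
  exact f.le_ubar hx (hne _ (convex_Ici e h₁ h₂ ha hb hab)) t

/-- Right continuity at the left endpoint: the right limits of the levels are again feasible. -/
lemma ubar_right_cont (hx : ∀ t, Nonneg (x t)) {e : ℝ}
    (hne : ∀ ε, e ≤ ε → EpsRationalized x p ε) (t : Fin T) :
    Tendsto (fun ε => ubar x p S (x t, ε)) (𝓝[>] e) (𝓝 (ubar x p S (x t, e))) := by
  have key : ∀ s, ∃ l, Tendsto (fun ε => ubar x p S (x s, ε)) (𝓝[>] e) (𝓝 l) := by
    intro s
    have hm : Monotone fun ε => ubar x p S (x s, max ε e) := fun a b hab =>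
      ubar_mono hx (hne _ (le_max_right _ _)) (max_le_max_right e hab) s
    refine ⟨_, (hm.tendsto_nhdsGT e).congr' ?_⟩
    filter_upwards [self_mem_nhdsWithin] with ε hε
    rw [max_eq_left (le_of_lt hε)]
  choose L hL using key
  have hid : Tendsto (fun ε : ℝ => ε) (𝓝[>] e) (𝓝 e) := tendsto_id.mono_left nhdsWithin_le_nhds
  have hf : Feas x p S e L := by
    refine ⟨fun s hs => ?_, fun s r => ?_⟩
    · refine tendsto_nhds_unique (hL s) (tendsto_const_nhds.congr' ?_)
      filter_upwards [self_mem_nhdsWithin] with ε hε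
      exact ((feas_ubar hx (hne ε (le_of_lt hε))).1 s hs).symm
    · refine le_of_tendsto_of_tendsto (hL s)
        ((((hL r).add_const _).sub_const _).add hid) ?_
      filter_upwards [self_mem_nhdsWithin] with ε hε
      exact (feas_ubar hx (hne ε (le_of_lt hε))).2 s r
  have h1 : L t ≤ ubar x p S (x t, e) := hf.le_ubar hx (hne e le_rfl) t
  have h2 : ubar x p S (x t, e) ≤ L t := by
    refine ge_of_tendsto (hL t) ?_
    filter_upwards [self_mem_nhdsWithin] with ε hε
    exact ubar_mono hx (hne e le_rfl) (le_of_lt hε) t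
  rw [← le_antisymm h1 h2]
  exact hL t

lemma continuousOn_ubar_data (hx : ∀ t, Nonneg (x t)) {e : ℝ}
    (hne : ∀ ε, e ≤ ε → EpsRationalized x p ε) (t : Fin T) :
    ContinuousOn (fun ε => ubar x p S (x t, ε)) (Set.Ici e) := by
  intro ε hε
  rcases (show e ≤ ε from hε).eq_or_lt with rfl | hlt
  · rw [← continuousWithinAt_Ioi_iff_Ici]
    exact ubar_right_cont hx hne t
  · have h := (concaveOn_ubar (S := S) hx hne t).continuousOn_interior
    rw [interior_Ici] at h
    exact (h.continuousAt (Ioi_mem_nhds hlt)).continuousWithinAt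

lemma dot_mono {a y z : Fin K → ℝ} (ha : ∀ i, 0 < a i) (h : ∀ i, y i ≤ z i) :
    dot a y ≤ dot a z :=
  sum_le_sum fun i _ => mul_le_mul_of_nonneg_left (h i) (ha i).le

lemma dot_strict_mono {a y z : Fin K → ℝ} (ha : ∀ i, 0 < a i) (h : ∀ i, y i ≤ z i)
    (h' : ∃ i, y i < z i) : dot a y < dot a z := by
  obtain ⟨i, hi⟩ := h'
  exact sum_lt_sum (fun i _ => mul_le_mul_of_nonneg_left (h i) (ha i).le)
    ⟨i, mem_univ i, mul_lt_mul_of_pos_left hi (ha i)⟩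

end Aux


/-- With `x̃^0 = x^S` in the dataset, the upper bound `ū(x̃^1, x^S, ε)` is
strictly increasing and continuous jointly in `(x̃^1, ε)` over the region where
`ε ≥ ε*` and `x̃^1 ≠ x^S`. -/
theorem utility_upper_bound_strict_mono_continuous {K T : ℕ}
    (x p : Fin T → Fin K → ℝ)
    (hx : ∀ t, Nonneg (x t)) (hp : ∀ t i, 0 < p t i)
    (εstar : ℝ) (hstar : IsEpsStar x p εstar) (S : Fin T) :
    ContinuousOn (ubar x p S) (ubarRegion x S εstar) ∧
    (∀ q q' : (Fin K → ℝ) × ℝ,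
      q ∈ ubarRegion x S εstar → q' ∈ ubarRegion x S εstar →
      (∀ i, q'.1 i ≤ q.1 i) → q'.2 ≤ q.2 →
      ((∃ i, q'.1 i < q.1 i) ∨ q'.2 < q.2) →
      ubar x p S q' < ubar x p S q) := by
  obtain ⟨-, ⟨u₀, hu₀⟩, -⟩ := hstar
  have hne : ∀ ε, εstar ≤ ε → EpsRationalized x p ε := fun ε hε => ⟨u₀, hu₀.mono hε⟩
  constructor
  · have hc : ContinuousOn (fun q : (Fin K → ℝ) × ℝ =>
        envelope x p S (fun t => ubar x p S (x t, q.2)) q.1 + q.2) (ubarRegion x S εstar) := by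
      refine ContinuousOn.add ?_ continuousOn_snd
      unfold envelope
      refine ContinuousOn.finset_inf'_apply _ fun t _ => ?_
      refine (ContinuousOn.add ?_ ?_).sub continuousOn_const
      · exact (continuousOn_ubar_data (S := S) hx hne t).comp continuousOn_snd
          fun q hq => hq.2.1
      · unfold dot
        fun_prop
    exact hc.congr fun q hq => ubar_eq hx (hne q.2 hq.2.1) hq.1 hq.2.2
  · rintro ⟨y, ε⟩ ⟨y', ε'⟩ ⟨hy, hε, hyS⟩ ⟨hy', hε', hyS'⟩ hyy hεε hlt
    dsimp only at *
    rw [ubar_eq hx (hne ε hε) hy hyS, ubar_eq hx (hne ε' hε') hy' hyS']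
    -- The minimum defining the larger side is attained at some index; compare there.
    obtain ⟨t, -, ht⟩ := exists_mem_eq_inf' (s := (univ : Finset (Fin T))) ⟨S, mem_univ S⟩
      (fun t => ubar x p S (x t, ε) + dot (p t) y - dot (p t) (x t))
    have ht' : envelope x p S (fun t => ubar x p S (x t, ε)) y =
      ubar x p S (x t, ε) + dot (p t) y - dot (p t) (x t) := ht
    have h1 := envelope_le (x := x) (p := p) (S := S) (fun t => ubar x p S (x t, ε')) y' t
    have h2 := ubar_mono (S := S) hx (hne ε' hε') hεε t
    have h3 := dot_mono (hp t) hyy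
    rcases hlt with hlt | hlt
    · have h4 := dot_strict_mono (hp t) hyy hlt
      linarith
    · linarith
end
end
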